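/- arXiv:1507.08617 — 6 statements merged into one kernel-verified Lean document; each statement's English description precedes it below -/
import Mathlib

section
/- Let m be an integer with m ≠ 1 and m ≠ -1, and let n ≥ 2 be a natural number. Then m^(n-1) divides n! (as integers) if and only if (m = 2 or m = -2) and n is a power of 2. -/
open Nat

/-!
Legendre's formula `(p - 1) * v_p(n!) = n - s_p(n)`, with `s_p` the sum of the base-`p` digits,
gives `(p - 1) * v_p(n!) ≤ n - 1`. So a prime power `p ^ j ∣ m` with `m ^ (n - 1) ∣ n!` satisfies
`(p - 1) * j ≤ 1`, which leaves only `m = ±2`. For these, divisibility means `s_2(n) = 1`, that is,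
`n` has a single nonzero binary digit.
-/

theorem digits_sum_ne_zero {b n : ℕ} (hn : n ≠ 0) : (digits b n).sum ≠ 0 := by
  intro hsum
  have hlast : (digits b n).getLast (digits_ne_nil_iff_ne_zero.mpr hn) = 0 :=
    List.sum_eq_zero_iff_forall_eq_nat.mp hsum _ (List.getLast_mem _)
  exact getLast_digit_ne_zero b hn hlast

theorem exists_eq_pow_of_digits_sum_eq_one {b n : ℕ} (hb : 1 < b)
    (hsum : (digits b n).sum = 1) : ∃ k : ℕ, n = b ^ k := by
  induction n using Nat.strong_induction_on with
  | _ n ih =>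
    have hn : n ≠ 0 := by
      rintro rfl
      simp at hsum
    rw [digits_def' hb (Nat.pos_of_ne_zero hn), List.sum_cons] at hsum
    have hdivmod : b * (n / b) + n % b = n := Nat.div_add_mod n b
    rcases Nat.add_eq_one_iff.mp hsum with ⟨hmod, htail⟩ | ⟨hmod, htail⟩
    · obtain ⟨k, hk⟩ := ih (n / b) (Nat.div_lt_self (Nat.pos_of_ne_zero hn) hb) htail
      exact ⟨k + 1, by rw [← hdivmod, hmod, hk, add_zero, pow_succ']⟩
    · have hdiv : n / b = 0 := by_contra fun hne => digits_sum_ne_zero hne htail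
      exact ⟨0, by rw [← hdivmod, hmod, hdiv, mul_zero, zero_add, pow_zero]⟩

theorem digits_sum_eq_one_iff {b n : ℕ} (hb : 1 < b) :
    (digits b n).sum = 1 ↔ ∃ k : ℕ, n = b ^ k := by
  refine ⟨exists_eq_pow_of_digits_sum_eq_one hb, ?_⟩
  rintro ⟨k, rfl⟩
  have hdigits := digits_base_pow_mul (k := k) hb one_pos
  rw [mul_one] at hdigits
  simp [hdigits, digits_of_lt b 1 one_ne_zero hb]

theorem prime_pow_dvd_factorial_iff_add_digits_sum_le {p : ℕ} (hp : p.Prime) (k n : ℕ) :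
    p ^ k ∣ n ! ↔ (p - 1) * k + (digits p n).sum ≤ n := by
  have : Fact p.Prime := ⟨hp⟩
  have hsub : 0 < p - 1 := Nat.sub_pos_of_lt hp.one_lt
  rw [padicValNat_dvd_iff_le (factorial_ne_zero n), ← Nat.mul_le_mul_left_iff hsub,
    sub_one_mul_padicValNat_factorial, Nat.le_sub_iff_add_le (digit_sum_le p n)]

theorem two_pow_sub_one_dvd_factorial_iff {n : ℕ} (hn : n ≠ 0) :
    2 ^ (n - 1) ∣ n ! ↔ ∃ k : ℕ, n = 2 ^ k := by
  have hsum : (digits 2 n).sum ≠ 0 := digits_sum_ne_zero hn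
  rw [prime_pow_dvd_factorial_iff_add_digits_sum_le prime_two,
    ← digits_sum_eq_one_iff one_lt_two]
  omega

theorem sub_one_mul_le_one_of_pow_sub_one_dvd_factorial {p j a n : ℕ} (hp : p.Prime)
    (hn : 2 ≤ n) (hpa : p ^ j ∣ a) (ha : a ^ (n - 1) ∣ n !) : (p - 1) * j ≤ 1 := by
  have hdvd : p ^ (j * (n - 1)) ∣ n ! := by
    rw [pow_mul]
    exact (pow_dvd_pow_of_dvd hpa _).trans ha
  have hsum : (digits p n).sum ≠ 0 := digits_sum_ne_zero (by omega)
  have hlegendre : (p - 1) * j * (n - 1) + (digits p n).sum ≤ n := by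
    rw [mul_assoc]
    exact (prime_pow_dvd_factorial_iff_add_digits_sum_le hp _ n).mp hdvd
  have hle : (p - 1) * j * (n - 1) ≤ 1 * (n - 1) := by omega
  exact Nat.le_of_mul_le_mul_right hle (by omega)

theorem eq_two_of_pow_sub_one_dvd_factorial {a n : ℕ} (ha : a ≠ 1) (hn : 2 ≤ n)
    (hdvd : a ^ (n - 1) ∣ n !) : a = 2 := by
  rcases eq_two_pow_or_exists_odd_prime_and_dvd a with ⟨j, rfl⟩ | ⟨p, hp, hpa, hodd⟩
  · have hj : (2 - 1) * j ≤ 1 :=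
      sub_one_mul_le_one_of_pow_sub_one_dvd_factorial prime_two hn dvd_rfl hdvd
    have hj0 : j ≠ 0 := by
      rintro rfl
      exact ha (pow_zero 2)
    obtain rfl : j = 1 := by omega
    exact pow_one 2
  · have hp2 : (p - 1) * 1 ≤ 1 :=
      sub_one_mul_le_one_of_pow_sub_one_dvd_factorial hp hn (by rwa [pow_one]) hdvd
    have hp_eq : p = 2 := le_antisymm (by omega) hp.two_le
    exact absurd (hp_eq ▸ hodd) (by decide)

/-- Lemma 13 of the paper: for an integer `m ≠ ±1` and `n ≥ 2`,
`m^(n-1)` divides `n!` (in `ℤ`) iff `m = ±2` and `n` is a power of `2`. -/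
theorem divisibility_factorial_power (m : ℤ) (hm1 : m ≠ 1) (hm2 : m ≠ -1)
    (n : ℕ) (hn : 2 ≤ n) :
    m ^ (n - 1) ∣ (n ! : ℤ) ↔ (m = 2 ∨ m = -2) ∧ ∃ k : ℕ, n = 2 ^ k := by
  have hm : m.natAbs ≠ 1 := by omega
  have habs : m = 2 ∨ m = -2 ↔ m.natAbs = 2 := by omega
  rw [← Int.natAbs_dvd_natAbs, Int.natAbs_pow, Int.natAbs_natCast, habs,
    ← two_pow_sub_one_dvd_factorial_iff (by omega)]
  constructor
  · intro hdvd
    have htwo : m.natAbs = 2 := eq_two_of_pow_sub_one_dvd_factorial hm hn hdvd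
    exact ⟨htwo, htwo ▸ hdvd⟩
  · rintro ⟨htwo, hdvd⟩
    rwa [htwo]
end

section
/- Let d and k be integers. Define a sequence of integers x_r for r ≥ 2 by x_2 = d² − k² and, for r ≥ 3, x_r = (r−1)·(−1)^r·(d^r − k^r) + Σ_{m=2}^{r−1} C(r,m)·(−1)^{r−m+1}·d^{r−m}·x_m, where C(r,m) is the binomial coefficient. Then for every r ≥ 2, x_r = (d − k)^{r−1}·(d + (r−1)·k). -/
open Nat Finset

/-!
Set `y r = (d - k) ^ r + r * k * (d - k) ^ (r - 1)`, so that `y 0 = 1`, `y 1 = d` and `y r` is the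
claimed closed form for `r ≥ 1`. The binomial theorem and its derivative evaluate the binomial
transform `∑ m ≤ r, C(r, m) * (-d) ^ (r - m) * y m` to `(-k) ^ r + r * k * (-k) ^ (r - 1)`, which is
`(1 - r) * (-k) ^ r`. Separating the terms `m = 0, 1, r` turns this into the recurrence that
defines `x`.
-/

section CommSemiring

variable {R : Type*} [CommSemiring R]

theorem sum_choose_mul_pow_mul_cast_mul_pow_pred (a b : R) (n : ℕ) :
    ∑ m ∈ range (n + 1), (n.choose m : R) * b ^ (n - m) * (m * a ^ (m - 1)) =
      n * (a + b) ^ (n - 1) := by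
  obtain _ | n := n
  · simp
  rw [sum_range_succ', add_tsub_cancel_right, add_pow, mul_sum, cast_zero, zero_mul, mul_zero,
    add_zero]
  refine sum_congr rfl fun m _ ↦ ?_
  have absorption : ((n + 1).choose (m + 1) : R) * (m + 1 : ℕ) = (n + 1 : ℕ) * n.choose m := by
    rw [← cast_mul, ← cast_mul, add_one_mul_choose_eq]
  calc
    _ = ((n + 1).choose (m + 1) * (m + 1 : ℕ) : R) * (a ^ m * b ^ (n - m)) := by
      rw [Nat.add_sub_add_right, add_tsub_cancel_right]
      ring
    _ = _ := by
      rw [absorption]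
      ring

theorem sum_choose_mul_pow_mul_pow_add (a b c : R) (n : ℕ) :
    ∑ m ∈ range (n + 1), (n.choose m : R) * b ^ (n - m) * (a ^ m + m * c * a ^ (m - 1)) =
      (a + b) ^ n + n * c * (a + b) ^ (n - 1) := by
  calc
    _ = ∑ m ∈ range (n + 1), a ^ m * b ^ (n - m) * n.choose m +
        c * ∑ m ∈ range (n + 1), (n.choose m : R) * b ^ (n - m) * (m * a ^ (m - 1)) := by
      rw [mul_sum, ← sum_add_distrib]
      exact sum_congr rfl fun m _ ↦ by ring
    _ = (a + b) ^ n + n * c * (a + b) ^ (n - 1) := by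
      rw [← add_pow, sum_choose_mul_pow_mul_cast_mul_pow_pred]
      ring

end CommSemiring

theorem sum_range_succ_eq_add_add_sum_Icc_add {M : Type*} [AddCommMonoid M] (f : ℕ → M) {r : ℕ}
    (hr : 2 ≤ r) :
    ∑ m ∈ range (r + 1), f m = f 0 + f 1 + ∑ m ∈ Icc 2 (r - 1), f m + f r := by
  have Icc_eq_Ico : Icc 2 (r - 1) = Ico 2 r := by
    ext m
    simp only [mem_Icc, mem_Ico]
    lia
  rw [sum_range_succ, ← sum_range_add_sum_Ico f hr, Icc_eq_Ico, sum_range_succ, sum_range_one]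

section CommRing

variable {R : Type*} [CommRing R]

/-- The closed form of the sequence `x`, written so that it also takes the values `1` at `0` and `d`
at `1` which make its binomial transform a single monomial. At `r = 0` the truncated exponent
`r - 1` is harmless because of the factor `r`. -/
def closedForm (d k : R) (r : ℕ) : R :=
  (d - k) ^ r + r * k * (d - k) ^ (r - 1)

theorem closedForm_zero (d k : R) : closedForm d k 0 = 1 := by
  simp [closedForm]

theorem closedForm_one (d k : R) : closedForm d k 1 = d := by
  simp [closedForm]

theorem closedForm_eq_mul (d k : R) {r : ℕ} (hr : r ≠ 0) :
    closedForm d k r = (d - k) ^ (r - 1) * (d + ((r : R) - 1) * k) := by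
  rw [closedForm, ← pow_sub_one_mul hr]
  ring

theorem sum_choose_mul_neg_pow_mul_closedForm (d k : R) (r : ℕ) :
    ∑ m ∈ range (r + 1), (r.choose m : R) * (-d) ^ (r - m) * closedForm d k m =
      (1 - r) * (-k) ^ r := by
  simp only [closedForm]
  rw [sum_choose_mul_pow_mul_pow_add, show d - k + -d = -k by ring]
  obtain rfl | hr := eq_or_ne r 0
  · simp
  · rw [← pow_sub_one_mul hr]
    ring

theorem closedForm_recurrence (d k : R) {r : ℕ} (hr : 2 ≤ r) :
    closedForm d k r = ((r : R) - 1) * (-1) ^ r * (d ^ r - k ^ r) +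
      ∑ m ∈ Icc 2 (r - 1),
        (r.choose m : R) * (-1) ^ (r - m + 1) * d ^ (r - m) * closedForm d k m := by
  have signed_sum : ∑ m ∈ Icc 2 (r - 1),
      (r.choose m : R) * (-1) ^ (r - m + 1) * d ^ (r - m) * closedForm d k m =
        -∑ m ∈ Icc 2 (r - 1), (r.choose m : R) * (-d) ^ (r - m) * closedForm d k m := by
    rw [← sum_neg_distrib]
    exact sum_congr rfl fun m _ ↦ by rw [neg_pow d]; ring
  have transform := sum_choose_mul_neg_pow_mul_closedForm d k r
  rw [sum_range_succ_eq_add_add_sum_Icc_add _ hr] at transform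
  simp only [closedForm_zero, closedForm_one, choose_zero_right, choose_one_right, choose_self,
    Nat.sub_zero, Nat.sub_self, pow_zero, cast_one, one_mul, mul_one] at transform
  have linear_term : (-d) ^ (r - 1) * d = -(-d) ^ r := by
    rw [← pow_sub_one_mul (show r ≠ 0 by lia) (-d), mul_neg, neg_neg]
  rw [signed_sum]
  linear_combination transform - r * linear_term + (1 - r) * (neg_pow d r - neg_pow k r)

theorem closed_form_x_general (d k : R) (x : ℕ → R)
    (hx2 : x 2 = d ^ 2 - k ^ 2)
    (hxr : ∀ r : ℕ, 3 ≤ r →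
      x r = ((r : R) - 1) * (-1) ^ r * (d ^ r - k ^ r) +
        ∑ m ∈ Icc 2 (r - 1), (r.choose m : R) * (-1) ^ (r - m + 1) * d ^ (r - m) * x m) :
    ∀ r : ℕ, 2 ≤ r → x r = (d - k) ^ (r - 1) * (d + ((r : R) - 1) * k) := by
  intro r hr
  rw [← closedForm_eq_mul d k (by lia)]
  induction r using Nat.strong_induction_on with
  | _ r ih =>
    obtain rfl | hr3 := hr.eq_or_lt
    · rw [hx2, closedForm]
      push_cast
      ring
    · rw [hxr r hr3, closedForm_recurrence d k hr]
      congr 1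
      refine sum_congr rfl fun m hm ↦ ?_
      rw [mem_Icc] at hm
      rw [ih m (by lia) hm.1]

end CommRing

/-- The closed-form identity from the proof of Lemma 15: if `x 2 = d² - k²` and
`x r = (r-1)·(-1)^r·(d^r - k^r) + Σ_{m=2}^{r-1} C(r,m)·(-1)^{r-m+1}·d^{r-m}·x m`
for `r ≥ 3`, then `x r = (d - k)^{r-1}·(d + (r-1)·k)` for all `r ≥ 2`. -/
theorem closed_form_x (d k : ℤ) (x : ℕ → ℤ)
    (hx2 : x 2 = d ^ 2 - k ^ 2)
    (hxr : ∀ r : ℕ, 3 ≤ r →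
      x r = ((r : ℤ) - 1) * (-1) ^ r * (d ^ r - k ^ r) +
        ∑ m ∈ Finset.Icc 2 (r - 1),
          (r.choose m : ℤ) * (-1) ^ (r - m + 1) * d ^ (r - m) * x m) :
    ∀ r : ℕ, 2 ≤ r → x r = (d - k) ^ (r - 1) * (d + ((r : ℤ) - 1) * k) :=
  closed_form_x_general d k x hx2 hxr
end

section
/- Let n ≥ 2 be a natural number and let d, k be integers with k > 0. Suppose that for every r with 2 ≤ r ≤ n, the integer (n!)^(r−1) divides (d − k)^(r−1)·(d + (r−1)·k). Then n! divides d − k. -/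
open Nat

/-!
Write `a = d - k`, so that `d + (r - 1) * k = a + r * k`, and let `p ^ j ∣ n!` with `p` prime.
If `p ^ j ∤ a`, then `p` divides `a` strictly fewer than `j` times, so that
`(p ^ j) ^ (r - 1) ∣ a ^ (r - 1) * (a + r * k)` leaves `p ^ (r - 1) ∣ a + r * k`. Comparing
`r = n - 1` with `r = n` gives `p ^ (n - 2) ∣ k`, hence `p ^ (n - 2) ∣ a`, and even
`p ^ (n - 1) ∣ a` when `p ∣ n`. But `n!` contains at most `n - 1` factors `p`, and at most `n - 2`
when `p ∤ n`, so `p ^ j ∣ a` after all.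
-/

theorem pow_dvd_of_pow_pow_dvd_pow_mul {M : Type*} [CommMonoidWithZero M] [IsCancelMulZero M]
    {p a b : M} {j m : ℕ} (hp : Prime p) (hpa : ¬p ^ j ∣ a) (h : (p ^ j) ^ m ∣ a ^ m * b) :
    p ^ m ∣ b := by
  have hfin : FiniteMultiplicity p a := ⟨j, fun hdvd ↦ hpa ((pow_dvd_pow p j.le_succ).trans hdvd)⟩
  obtain ⟨u, hau, hpu⟩ := hfin.exists_eq_pow_mul_and_not_dvd
  set v := multiplicity p a
  have hvj : v + 1 ≤ j := by
    by_contra! hjv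
    exact hpa (hau ▸ (pow_dvd_pow p (Nat.lt_succ_iff.1 hjv)).mul_right u)
  have hcancel : (p ^ v) ^ m * p ^ m ∣ (p ^ v) ^ m * (u ^ m * b) := by
    rw [← mul_pow, ← pow_succ, ← mul_assoc, ← mul_pow, ← hau]
    exact (pow_dvd_pow_of_dvd (pow_dvd_pow p hvj) m).trans h
  have hdvd : p ^ m ∣ u ^ m * b :=
    (mul_dvd_mul_iff_left (pow_ne_zero m (pow_ne_zero v hp.ne_zero))).1 hcancel
  exact hp.pow_dvd_of_dvd_mul_left m (fun hpum ↦ hpu (hp.dvd_of_dvd_pow hpum)) hdvd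

theorem dvd_of_dvd_add_mul_of_dvd_add_add_one_mul {R : Type*} [CommRing R] {s a c k : R}
    (h : s ∣ a + c * k) (h' : s ∣ a + (c + 1) * k) : s ∣ k := by
  have hsub : a + (c + 1) * k - (a + c * k) = k := by ring
  exact hsub ▸ dvd_sub h' h

theorem pow_dvd_of_consecutive_pow_pow_dvd {R : Type*} [CommRing R] [IsDomain R]
    {p a c k : R} {j m : ℕ} (hp : Prime p) (hj : j ≤ m ∨ p ∣ c + 1 ∧ j ≤ m + 1)
    (h : (p ^ j) ^ m ∣ a ^ m * (a + c * k))
    (h' : (p ^ j) ^ (m + 1) ∣ a ^ (m + 1) * (a + (c + 1) * k)) : p ^ j ∣ a := by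
  by_contra hpa
  have hc : p ^ m ∣ a + c * k := pow_dvd_of_pow_pow_dvd_pow_mul hp hpa h
  have hc' : p ^ (m + 1) ∣ a + (c + 1) * k := pow_dvd_of_pow_pow_dvd_pow_mul hp hpa h'
  have hk : p ^ m ∣ k :=
    dvd_of_dvd_add_mul_of_dvd_add_add_one_mul hc ((pow_dvd_pow p m.le_succ).trans hc')
  rcases hj with hjm | ⟨hpc, hjm⟩
  · have ha : p ^ m ∣ a := (dvd_add_left (hk.mul_left c)).1 hc
    exact hpa ((pow_dvd_pow p hjm).trans ha)
  · have hck : p ^ (m + 1) ∣ (c + 1) * k := pow_succ' p m ▸ mul_dvd_mul hpc hk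
    have ha : p ^ (m + 1) ∣ a := (dvd_add_left hck).1 hc'
    exact hpa ((pow_dvd_pow p hjm).trans ha)

theorem lt_of_prime_pow_dvd_factorial {p j n : ℕ} (hp : p.Prime) (hn : n ≠ 0)
    (h : p ^ j ∣ n !) : j < n := by
  have : Fact p.Prime := ⟨hp⟩
  exact ((padicValNat_dvd_iff_le n.factorial_ne_zero).1 h).trans_lt
    (padicValNat_factorial_lt_of_ne_zero p hn)

theorem le_or_dvd_and_le_of_prime_pow_dvd_factorial {p j m : ℕ} (hp : p.Prime)
    (h : p ^ j ∣ (m + 2)!) : j ≤ m ∨ p ∣ m + 2 ∧ j ≤ m + 1 := by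
  by_cases hpm : p ∣ m + 2
  · exact .inr ⟨hpm, Nat.lt_succ_iff.1 (lt_of_prime_pow_dvd_factorial hp (by simp) h)⟩
  · have hcop : (p ^ j).Coprime (m + 2) := (hp.coprime_iff_not_dvd.2 hpm).pow_left j
    have hpred : p ^ j ∣ (m + 1)! := hcop.dvd_of_dvd_mul_left h
    exact .inl (Nat.lt_succ_iff.1 (lt_of_prime_pow_dvd_factorial hp (by simp) hpred))

theorem factorial_dvd_of_consecutive_pow_dvd {m : ℕ} {a k : ℤ}
    (h : ((m + 2)! : ℤ) ^ m ∣ a ^ m * (a + (m + 1) * k))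
    (h' : ((m + 2)! : ℤ) ^ (m + 1) ∣ a ^ (m + 1) * (a + (m + 1 + 1) * k)) :
    ((m + 2)! : ℤ) ∣ a := by
  rw [Int.natCast_dvd, Nat.dvd_iff_prime_pow_dvd_dvd]
  intro p j hp hpj
  have hj : j ≤ m ∨ (p : ℤ) ∣ m + 1 + 1 ∧ j ≤ m + 1 := by
    exact_mod_cast le_or_dvd_and_le_of_prime_pow_dvd_factorial hp hpj
  have hpj' : (p : ℤ) ^ j ∣ (m + 2)! := by exact_mod_cast hpj
  rw [← Int.natCast_dvd, Nat.cast_pow]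
  exact pow_dvd_of_consecutive_pow_pow_dvd (Nat.prime_iff_prime_int.1 hp) hj
    ((pow_dvd_pow_of_dvd hpj' m).trans h) ((pow_dvd_pow_of_dvd hpj' (m + 1)).trans h')

theorem factorial_dvd_sub_general (n : ℕ) (d k : ℤ)
    (h : ∀ r : ℕ, 2 ≤ r → n ≤ r + 1 → r ≤ n →
      (n ! : ℤ) ^ (r - 1) ∣ (d - k) ^ (r - 1) * (d + ((r : ℤ) - 1) * k)) :
    (n ! : ℤ) ∣ d - k := by
  rcases n with _ | _ | m
  · simp
  · simp
  have hpow (i : ℕ) (hmi : m ≤ i) (him : i ≤ m + 1) :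
      ((m + 2)! : ℤ) ^ i ∣ (d - k) ^ i * (d - k + (i + 1) * k) := by
    rcases i.eq_zero_or_pos with rfl | hi
    · simp
    · have hlin : d + (((i + 1 : ℕ) : ℤ) - 1) * k = d - k + (i + 1) * k := by push_cast; ring
      exact hlin ▸ h (i + 1) (by lia) (by lia) (by lia)
  exact factorial_dvd_of_consecutive_pow_dvd (hpow m le_rfl m.le_succ)
    (by exact_mod_cast hpow (m + 1) m.le_succ le_rfl)

/-- The arithmetic core of Lemma 15: if `n ≥ 2`, `k > 0`, and for every
`2 ≤ r ≤ n` the integer `(n!)^(r-1)` divides `(d-k)^(r-1)·(d + (r-1)·k)`,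
then `n!` divides `d - k`. -/
theorem factorial_dvd_sub (n : ℕ) (hn : 2 ≤ n) (d k : ℤ) (hk : 0 < k)
    (h : ∀ r : ℕ, 2 ≤ r → r ≤ n →
      (n ! : ℤ) ^ (r - 1) ∣ (d - k) ^ (r - 1) * (d + ((r : ℤ) - 1) * k)) :
    (n ! : ℤ) ∣ d - k :=
  factorial_dvd_sub_general n d k fun r h2r _ hrn ↦ h r h2r hrn
end

section
/- Let R be a commutative ring, let n ≥ 1 be a natural number, and work in the exterior algebra of the free R-module R^(2n) with standard basis e_1, …, e_{2n}. Let θ = −(e_1∧e_{n+1} + ⋯ + e_n∧e_{2n}), and let ω = Σ_{1 ≤ i < j ≤ 2n} a_{ij}·e_i∧e_j for coefficients a_{ij} in R. Then ω∧θ^(n−1) = (−1)^(n−1)·(n−1)!·(a_{1,n+1} + a_{2,n+2} + ⋯ + a_{n,2n})·(e_1∧e_{n+1})∧(e_2∧e_{n+2})∧⋯∧(e_n∧e_{2n}). -/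
open Finset

/-- The embedding `{1,…,n} → {1,…,2n}`, `i ↦ i`. -/
def loIdx (n : ℕ) (i : Fin n) : Fin (2 * n) := ⟨i.1, by have := i.isLt; omega⟩

/-- The embedding `{1,…,n} → {1,…,2n}`, `i ↦ n + i`. -/
def hiIdx (n : ℕ) (i : Fin n) : Fin (2 * n) := ⟨n + i.1, by have := i.isLt; omega⟩

/-- The `i`-th standard basis vector of `R^(2n)`, viewed in the exterior algebra. -/
noncomputable def stdVec (R : Type*) [CommRing R] (n : ℕ) (i : Fin (2 * n)) :
    ExteriorAlgebra R (Fin (2 * n) → R) :=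
  ExteriorAlgebra.ι R (Pi.single i 1)

/-- The degree-two element `e_i ∧ e_{n+i}` of the exterior algebra of `R^(2n)`. -/
noncomputable def pairWedge (R : Type*) [CommRing R] (n : ℕ) (i : Fin n) :
    ExteriorAlgebra R (Fin (2 * n) → R) :=
  stdVec R n (loIdx n i) * stdVec R n (hiIdx n i)

/-!
Each `p_l = e_l ∧ e_{n+l}` is central with `p_l ^ 2 = 0`, so only squarefree monomials survive in a
power of `p_1 + ⋯ + p_n`, and in degree `n - 1` this leaves
`(p_1 + ⋯ + p_n) ^ (n - 1) = (n - 1)! * ∑ m, ∏ l ≠ m, p_l`.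
Both `e_l` and `e_{n+l}` annihilate `p_l`, so `e_i ∧ e_j` annihilates `∏ l ≠ m, p_l` unless
`i` and `j` both lie in `{m, n + m}`. Hence multiplying `ω` by `∏ l ≠ m, p_l` picks out the
coefficient `a_{m,n+m}` of `p_m`.
-/

section SquareZero

variable {C ι : Type*} [CommSemiring C]

theorem add_pow_succ_of_sq_eq_zero {p : C} (hp : p ^ 2 = 0) (q : C) (k : ℕ) :
    (p + q) ^ (k + 1) = q ^ (k + 1) + (k + 1) * (p * q ^ k) := by
  induction k with
  | zero => simp [add_comm]
  | succ k ih =>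
    calc (p + q) ^ (k + 1 + 1)
        = q ^ (k + 1 + 1) + ((k + 1 : ℕ) + 1) * (p * q ^ (k + 1)) + p ^ 2 * ((k + 1) * q ^ k) := by
          rw [pow_succ, ih]
          push_cast
          ring
      _ = q ^ (k + 1 + 1) + ((k + 1 : ℕ) + 1) * (p * q ^ (k + 1)) := by
          rw [hp, zero_mul, add_zero]

theorem sum_powersetCard_succ_insert_prod [DecidableEq ι] (p : ι → C) {b : ι} {s : Finset ι}
    (hb : b ∉ s) (k : ℕ) :
    ∑ t ∈ (insert b s).powersetCard (k + 1), ∏ i ∈ t, p i =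
      ∑ t ∈ s.powersetCard (k + 1), ∏ i ∈ t, p i + p b * ∑ t ∈ s.powersetCard k, ∏ i ∈ t, p i := by
  have notMem_of_mem {t : Finset ι} {j : ℕ} (ht : t ∈ s.powersetCard j) : b ∉ t :=
    fun hbt => hb ((mem_powersetCard.1 ht).1 hbt)
  have hdisj : Disjoint (s.powersetCard (k + 1)) ((s.powersetCard k).image (insert b)) := by
    refine disjoint_left.2 fun t ht ht' => notMem_of_mem ht ?_
    obtain ⟨u, -, rfl⟩ := mem_image.1 ht'
    exact mem_insert_self b u
  have hinj : Set.InjOn (insert b) (s.powersetCard k : Set (Finset ι)) := fun t ht u hu htu => by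
    rw [← erase_insert (notMem_of_mem ht), htu, erase_insert (notMem_of_mem hu)]
  rw [powersetCard_succ_insert hb, sum_union hdisj, sum_image hinj, mul_sum]
  exact congrArg _ (sum_congr rfl fun t ht => prod_insert (notMem_of_mem ht))

theorem sum_pow_of_sq_eq_zero {p : ι → C} (hp : ∀ i, p i ^ 2 = 0) (s : Finset ι) (k : ℕ) :
    (∑ i ∈ s, p i) ^ k = k.factorial * ∑ t ∈ s.powersetCard k, ∏ i ∈ t, p i := by
  classical
  induction s using Finset.induction_on generalizing k with
  | empty =>
    cases k with
    | zero => simp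
    | succ k => simp [powersetCard_eq_empty.2 (card_empty.trans_lt k.succ_pos)]
  | insert b s hb ih =>
    cases k with
    | zero => simp
    | succ k =>
      rw [sum_insert hb, add_pow_succ_of_sq_eq_zero (hp b), ih, ih,
        sum_powersetCard_succ_insert_prod p hb, Nat.factorial_succ]
      push_cast
      ring

theorem powersetCard_eq_image_erase [DecidableEq ι] {s : Finset ι} {k : ℕ} (hs : #s = k + 1) :
    s.powersetCard k = s.image s.erase := by
  ext t
  rw [mem_powersetCard, mem_image]
  constructor
  · rintro ⟨hts, htk⟩
    obtain ⟨m, hm⟩ : ∃ m, s \ t = {m} :=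
      card_eq_one.1 (by rw [card_sdiff_of_subset hts]; omega)
    refine ⟨m, (mem_sdiff.1 (hm ▸ mem_singleton_self m)).1, ?_⟩
    rw [← sdiff_singleton_eq_erase, ← hm, Finset.sdiff_sdiff_eq_self hts]
  · rintro ⟨m, hm, rfl⟩
    exact ⟨erase_subset m s, by rw [card_erase_of_mem hm, hs, Nat.add_sub_cancel]⟩

theorem sum_pow_of_sq_eq_zero_of_card_eq_succ [DecidableEq ι] {p : ι → C}
    (hp : ∀ i, p i ^ 2 = 0) {s : Finset ι} {k : ℕ} (hs : #s = k + 1) :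
    (∑ i ∈ s, p i) ^ k = k.factorial * ∑ m ∈ s, ∏ i ∈ s.erase m, p i := by
  rw [sum_pow_of_sq_eq_zero hp, powersetCard_eq_image_erase hs, sum_image (erase_injOn s)]

end SquareZero

theorem mul_coe_prod_center_eq_zero {A ι : Type*} [Ring A] {p : ι → Subring.center A}
    {s : Finset ι} {l : ι} (hl : l ∈ s) {x : A} (hx : x * p l = 0) :
    x * ((∏ i ∈ s, p i : Subring.center A) : A) = 0 := by
  classical
  rw [← mul_prod_erase s p hl, Subring.coe_mul, ← mul_assoc, hx, zero_mul]

section WedgeOfTwoVectors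

variable {R M : Type*} [CommRing R] [AddCommGroup M] [Module R M]

theorem ι_mul_ι_eq_neg_swap (x y : M) :
    ExteriorAlgebra.ι R x * ExteriorAlgebra.ι R y =
      -(ExteriorAlgebra.ι R y * ExteriorAlgebra.ι R x) :=
  eq_neg_of_add_eq_zero_left (ExteriorAlgebra.ι_add_mul_swap x y)

theorem ι_mul_ι_mem_center (x y : M) :
    ExteriorAlgebra.ι R x * ExteriorAlgebra.ι R y ∈ Subring.center (ExteriorAlgebra R M) := by
  suffices h : ∀ z, Commute z (ExteriorAlgebra.ι R x * ExteriorAlgebra.ι R y) from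
    Subring.mem_center_iff.2 h
  intro z
  induction z using ExteriorAlgebra.induction with
  | algebraMap r => exact Algebra.commutes r _
  | ι m =>
    rw [commute_iff_eq, ← mul_assoc, ι_mul_ι_eq_neg_swap m x, neg_mul, mul_assoc,
      ι_mul_ι_eq_neg_swap m y, mul_neg, neg_neg, mul_assoc]
  | mul a b ha hb => exact ha.mul_left hb
  | add a b ha hb => exact ha.add_left hb

theorem ι_mul_ι_mul_ι_self_left (x y : M) :
    ExteriorAlgebra.ι R x * (ExteriorAlgebra.ι R x * ExteriorAlgebra.ι R y) = 0 := by
  rw [← mul_assoc, ExteriorAlgebra.ι_sq_zero, zero_mul]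

theorem ι_mul_ι_mul_ι_self_right (x y : M) :
    ExteriorAlgebra.ι R y * (ExteriorAlgebra.ι R x * ExteriorAlgebra.ι R y) = 0 := by
  rw [ι_mul_ι_eq_neg_swap x y, mul_neg, ι_mul_ι_mul_ι_self_left, neg_zero]

end WedgeOfTwoVectors

section Indices

variable {n : ℕ}

theorem loIdx_lt_hiIdx (m : Fin n) : loIdx n m < hiIdx n m :=
  Fin.mk_lt_mk.2 (by omega)

theorem exists_eq_loIdx_or_eq_hiIdx (i : Fin (2 * n)) :
    ∃ l : Fin n, i = loIdx n l ∨ i = hiIdx n l := by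
  by_cases hi : i.1 < n
  · exact ⟨⟨i, hi⟩, Or.inl rfl⟩
  · exact ⟨⟨i - n, by omega⟩, Or.inr (Fin.ext (Nat.add_sub_cancel' (not_lt.1 hi)).symm)⟩

end Indices

section Pairs

variable (R : Type*) [CommRing R] {n : ℕ}

/-- `pairWedge R n l` as an element of the centre, a commutative ring in which products over
finsets make sense. -/
noncomputable def centralPairWedge (l : Fin n) :
    Subring.center (ExteriorAlgebra R (Fin (2 * n) → R)) :=
  ⟨pairWedge R n l, ι_mul_ι_mem_center _ _⟩

/-- The product `∏ l ≠ m, e_l ∧ e_{n+l}` in the exterior algebra of `R^(2n)`. -/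
noncomputable def prodPairWedgeErase (m : Fin n) : ExteriorAlgebra R (Fin (2 * n) → R) :=
  (∏ l ∈ univ.erase m, centralPairWedge R l :
    Subring.center (ExteriorAlgebra R (Fin (2 * n) → R)))

theorem stdVec_loIdx_mul_pairWedge (l : Fin n) :
    stdVec R n (loIdx n l) * pairWedge R n l = 0 :=
  ι_mul_ι_mul_ι_self_left _ _

theorem stdVec_hiIdx_mul_pairWedge (l : Fin n) :
    stdVec R n (hiIdx n l) * pairWedge R n l = 0 :=
  ι_mul_ι_mul_ι_self_right _ _

theorem centralPairWedge_sq (l : Fin n) : centralPairWedge R l ^ 2 = 0 := by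
  refine Subtype.ext ?_
  change pairWedge R n l ^ 2 = 0
  rw [sq]
  nth_rw 1 [pairWedge]
  rw [mul_assoc, stdVec_hiIdx_mul_pairWedge, mul_zero]

theorem coe_prod_centralPairWedge :
    ((∏ l, centralPairWedge R l : Subring.center (ExteriorAlgebra R (Fin (2 * n) → R))) :
      ExteriorAlgebra R (Fin (2 * n) → R)) = (List.ofFn (pairWedge R n)).prod := by
  rw [← List.prod_ofFn, ← Subring.subtype_apply, map_list_prod, List.map_ofFn]
  rfl

theorem sum_pairWedge_pow_sub_one (hn : 1 ≤ n) :
    (∑ l, pairWedge R n l) ^ (n - 1) =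
      ((n - 1).factorial : ExteriorAlgebra R (Fin (2 * n) → R)) *
        ∑ m, prodPairWedgeErase R m := by
  have hcard : #(univ : Finset (Fin n)) = n - 1 + 1 := by
    rw [card_fin, Nat.sub_add_cancel hn]
  have h := congrArg (Subring.center (ExteriorAlgebra R (Fin (2 * n) → R))).subtype
    (sum_pow_of_sq_eq_zero_of_card_eq_succ (centralPairWedge_sq R) hcard)
  rwa [map_pow, map_sum, map_mul, map_natCast, map_sum] at h

theorem prodPairWedgeErase_mem_center (m : Fin n) :
    prodPairWedgeErase R m ∈ Subring.center (ExteriorAlgebra R (Fin (2 * n) → R)) :=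
  Subtype.prop _

theorem pairWedge_mul_prodPairWedgeErase (m : Fin n) :
    pairWedge R n m * prodPairWedgeErase R m = (List.ofFn (pairWedge R n)).prod := by
  rw [← coe_prod_centralPairWedge, ← mul_prod_erase univ _ (mem_univ m)]
  rfl

variable {R}

theorem stdVec_mul_prodPairWedgeErase_eq_zero {i : Fin (2 * n)} {m : Fin n}
    (hlo : i ≠ loIdx n m) (hhi : i ≠ hiIdx n m) :
    stdVec R n i * prodPairWedgeErase R m = 0 := by
  obtain ⟨l, rfl | rfl⟩ := exists_eq_loIdx_or_eq_hiIdx i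
  · have hlm : l ≠ m := fun h => hlo (congrArg _ h)
    exact mul_coe_prod_center_eq_zero (mem_erase.2 ⟨hlm, mem_univ l⟩)
      (stdVec_loIdx_mul_pairWedge R l)
  · have hlm : l ≠ m := fun h => hhi (congrArg _ h)
    exact mul_coe_prod_center_eq_zero (mem_erase.2 ⟨hlm, mem_univ l⟩)
      (stdVec_hiIdx_mul_pairWedge R l)

theorem stdVec_mul_stdVec_mul_prodPairWedgeErase_eq_zero {i j : Fin (2 * n)} {m : Fin n}
    (hij : i < j) (hm : ¬(i = loIdx n m ∧ j = hiIdx n m)) :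
    stdVec R n i * stdVec R n j * prodPairWedgeErase R m = 0 := by
  rw [mul_assoc]
  by_cases hj : j = loIdx n m ∨ j = hiIdx n m
  · have hlo : i ≠ loIdx n m := by
      rintro rfl
      exact hj.elim hij.ne' fun h => hm ⟨rfl, h⟩
    have hhi : i ≠ hiIdx n m := by
      rintro rfl
      exact hj.elim (fun h => (loIdx_lt_hiIdx m).not_gt (h ▸ hij)) hij.ne'
    rw [Subring.mem_center_iff.1 (prodPairWedgeErase_mem_center R m), ← mul_assoc,
      stdVec_mul_prodPairWedgeErase_eq_zero hlo hhi, zero_mul]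
  · rw [not_or] at hj
    rw [stdVec_mul_prodPairWedgeErase_eq_zero hj.1 hj.2, mul_zero]

theorem sum_smul_stdVec_mul_prodPairWedgeErase (a : Fin (2 * n) → Fin (2 * n) → R) (m : Fin n) :
    (∑ i, ∑ j ∈ univ.filter (fun j => i < j), a i j • (stdVec R n i * stdVec R n j)) *
        prodPairWedgeErase R m =
      a (loIdx n m) (hiIdx n m) • (List.ofFn (pairWedge R n)).prod := by
  simp_rw [sum_mul, smul_mul_assoc]
  rw [sum_eq_single (loIdx n m), sum_eq_single (hiIdx n m)]
  · rw [← pairWedge_mul_prodPairWedgeErase R m, pairWedge]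
  · intro j hj hne
    rw [stdVec_mul_stdVec_mul_prodPairWedgeErase_eq_zero (mem_filter.1 hj).2 fun h => hne h.2,
      smul_zero]
  · exact fun h => absurd (mem_filter.2 ⟨mem_univ _, loIdx_lt_hiIdx m⟩) h
  · intro i _ hne
    refine sum_eq_zero fun j hj => ?_
    rw [stdVec_mul_stdVec_mul_prodPairWedgeErase_eq_zero (mem_filter.1 hj).2 fun h => hne h.1,
      smul_zero]
  · exact fun h => absurd (mem_univ _) h

end Pairs

/-- Lemma 22 of the paper, as a pure exterior-algebra identity: with
`θ = −(e_1∧e_{n+1} + ⋯ + e_n∧e_{2n})` and `ω = Σ_{1 ≤ i < j ≤ 2n} a_{ij} e_i∧e_j`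
in the exterior algebra of `R^(2n)`, one has
`ω∧θ^(n−1) = (−1)^(n−1)·(n−1)!·(a_{1,n+1} + ⋯ + a_{n,2n})·
(e_1∧e_{n+1})∧⋯∧(e_n∧e_{2n})`. -/
theorem omega_mul_theta_pow (R : Type*) [CommRing R] (n : ℕ) (hn : 1 ≤ n)
    (a : Fin (2 * n) → Fin (2 * n) → R)
    (θ ω : ExteriorAlgebra R (Fin (2 * n) → R))
    (hθ : θ = -∑ i : Fin n, pairWedge R n i)
    (hω : ω = ∑ i : Fin (2 * n), ∑ j ∈ Finset.univ.filter (fun j => i < j),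
      a i j • (stdVec R n i * stdVec R n j)) :
    ω * θ ^ (n - 1) =
      (-1) ^ (n - 1) * ((n - 1).factorial : ExteriorAlgebra R (Fin (2 * n) → R)) *
        ((∑ i : Fin n, a (loIdx n i) (hiIdx n i)) •
          (List.ofFn (pairWedge R n)).prod) := by
  have hsum : ω * ∑ m, prodPairWedgeErase R m =
      (∑ i : Fin n, a (loIdx n i) (hiIdx n i)) • (List.ofFn (pairWedge R n)).prod := by
    rw [hω, mul_sum, sum_smul]
    exact sum_congr rfl fun m _ => sum_smul_stdVec_mul_prodPairWedgeErase a m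
  have hscalar : Commute ω
      ((-1) ^ (n - 1) * ((n - 1).factorial : ExteriorAlgebra R (Fin (2 * n) → R))) :=
    ((Commute.neg_one_right ω).pow_right _).mul_right (Nat.commute_cast ω _)
  rw [hθ, neg_pow, sum_pairWedge_pow_sub_one R hn, ← hsum, ← mul_assoc, ← mul_assoc, ← mul_assoc,
    mul_assoc ω, hscalar.eq]
end

section
/- For every natural number n ≥ 1, 2^(n−1) divides n! if and only if n is a power of 2. -/
open Nat

/-! By Legendre's formula, `(p - 1) * v_p(n!) = n - s`, where `s` is the sum of the base-`p` digits
of `n`. Hence `p ^ (n - 1)` divides `(n!) ^ (p - 1)` exactly when `s ≤ 1`; for `n ≥ 1` this says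
that `n` has a single nonzero digit and that this digit is `1`. -/

theorem ofDigits_eq_zero_of_sum_eq_zero {R : Type*} [Semiring R] (b : R) {L : List ℕ}
    (hL : L.sum = 0) : ofDigits b L = 0 := by
  induction L with
  | nil => rfl
  | cons d L ih =>
    rw [List.sum_cons, Nat.add_eq_zero_iff] at hL
    obtain ⟨rfl, hL⟩ := hL
    rw [ofDigits, ih hL, Nat.cast_zero, mul_zero, add_zero]

theorem exists_ofDigits_eq_pow_of_sum_eq_one {R : Type*} [Semiring R] (b : R) {L : List ℕ}
    (hL : L.sum = 1) : ∃ k : ℕ, ofDigits b L = b ^ k := by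
  induction L with
  | nil => simp at hL
  | cons d L ih =>
    rw [List.sum_cons, Nat.add_eq_one_iff] at hL
    obtain ⟨rfl, hL⟩ | ⟨rfl, hL⟩ := hL
    · obtain ⟨k, hk⟩ := ih hL
      exact ⟨k + 1, by rw [ofDigits, hk, Nat.cast_zero, zero_add, _root_.pow_succ']⟩
    · have hzero : ofDigits b L = 0 := ofDigits_eq_zero_of_sum_eq_zero b hL
      exact ⟨0, by rw [ofDigits, hzero, Nat.cast_one, mul_zero, add_zero, pow_zero]⟩

theorem sum_digits_pos (b : ℕ) {n : ℕ} (hn : n ≠ 0) : 0 < (digits b n).sum := by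
  refine Nat.pos_of_ne_zero fun hsum ↦ hn ?_
  rw [← ofDigits_digits b n, ofDigits_eq_zero_of_sum_eq_zero b hsum]

theorem sum_digits_base_pow {b : ℕ} (hb : 1 < b) (k : ℕ) : (digits b (b ^ k)).sum = 1 := by
  have hdigits : digits b (b ^ k) = List.replicate k 0 ++ [1] := by
    simpa [digits_of_lt b 1 one_ne_zero hb] using digits_base_pow_mul (k := k) hb one_pos
  simp [hdigits]

theorem sum_digits_eq_one_iff {b : ℕ} (hb : 1 < b) (n : ℕ) :
    (digits b n).sum = 1 ↔ ∃ k : ℕ, n = b ^ k := by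
  constructor
  · intro hsum
    simpa only [ofDigits_digits] using exists_ofDigits_eq_pow_of_sum_eq_one b hsum
  · rintro ⟨k, rfl⟩
    exact sum_digits_base_pow hb k

theorem pow_dvd_factorial_pow_sub_one_iff {p : ℕ} (hp : p.Prime) (n r : ℕ) :
    p ^ r ∣ n ! ^ (p - 1) ↔ r ≤ n - (digits p n).sum := by
  have : Fact p.Prime := ⟨hp⟩
  rw [padicValNat_dvd_iff_le (pow_ne_zero _ n.factorial_ne_zero),
    padicValNat.pow, sub_one_mul_padicValNat_factorial]

theorem two_pow_dvd_factorial_iff_general {p : ℕ} (hp : p.Prime) (n : ℕ) (hn : 1 ≤ n) :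
    p ^ (n - 1) ∣ n ! ^ (p - 1) ↔ ∃ k : ℕ, n = p ^ k := by
  have hpos : 0 < (digits p n).sum := sum_digits_pos p (Nat.one_le_iff_ne_zero.mp hn)
  have hle : (digits p n).sum ≤ n := digit_sum_le p n
  rw [pow_dvd_factorial_pow_sub_one_iff hp, ← sum_digits_eq_one_iff hp.one_lt]
  omega

/-- Case `m = 2` of Lemma 13: for `n ≥ 1`, `2^(n-1) ∣ n!` iff `n` is a power of `2`. -/
theorem two_pow_dvd_factorial_iff (n : ℕ) (hn : 1 ≤ n) :
    2 ^ (n - 1) ∣ n ! ↔ ∃ k : ℕ, n = 2 ^ k := by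
  simpa using two_pow_dvd_factorial_iff_general prime_two n hn
end

section
/- Let m be an integer with m ≠ 0, 1, −1. Then for every natural number n ≥ 2, m^n does not divide n·(n−2)!. -/
open Nat

theorem mul_factorial_dvd_factorial_of_lt {k n : ℕ} (hkn : k < n) : n * k ! ∣ n ! := by
  rw [← mul_factorial_pred (Nat.ne_zero_of_lt hkn)]
  exact mul_dvd_mul_left n (factorial_dvd_factorial (le_pred_of_lt hkn))

theorem not_prime_pow_dvd_factorial {p n : ℕ} (hp : p.Prime) (hn : n ≠ 0) : ¬ p ^ n ∣ n ! := by
  have : Fact p.Prime := ⟨hp⟩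
  rw [padicValNat_dvd_iff_le (factorial_ne_zero n), not_le]
  exact padicValNat_factorial_lt_of_ne_zero p hn

theorem not_pow_dvd_factorial {a n : ℕ} (ha : a ≠ 1) (hn : n ≠ 0) : ¬ a ^ n ∣ n ! := by
  obtain ⟨p, hp, hpa⟩ := exists_prime_and_dvd ha
  exact fun h => not_prime_pow_dvd_factorial hp hn ((pow_dvd_pow_of_dvd hpa n).trans h)

/-- For `m ∈ ℤ` with `m ≠ 0, 1, -1` and every `n ≥ 2`, `m^n` does not divide
`n·(n-2)!`. -/
theorem pow_not_dvd_mul_factorial (m : ℤ) (hm0 : m ≠ 0) (hm1 : m ≠ 1) (hm2 : m ≠ -1)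
    (n : ℕ) (hn : 2 ≤ n) :
    ¬ (m ^ n ∣ (n : ℤ) * ((n - 2)! : ℤ)) := by
  intro h
  have natAbs_ne_one : m.natAbs ≠ 1 := by omega
  have natAbs_pow_dvd : m.natAbs ^ n ∣ n * (n - 2)! := by
    rwa [← Int.natCast_mul, Int.dvd_natCast, Int.natAbs_pow] at h
  have mul_factorial_dvd : n * (n - 2)! ∣ n ! := mul_factorial_dvd_factorial_of_lt (by omega)
  exact not_pow_dvd_factorial natAbs_ne_one (by omega) (natAbs_pow_dvd.trans mul_factorial_dvd)
end
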